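/- Let f be a real polynomial of degree n ≥ 2 all of whose complex roots are real, such that for each j ∈ {1, ..., n-1} there exists z_j with f(z_j) = 0 and f^{(j)}(z_j) = 0. If f is not trivial, i.e. not of the form a(X - b)^n, then f has at least five distinct roots. -/

import Mathlib

open Polynomial

lemma laguerre_multiset (z : ℝ) (s : Multiset ℝ) :
    let P := (s.map (fun r => X - C r)).prod
    0 ≤ (derivative P).eval z ^ 2 - P.eval z * (derivative (derivative P)).eval z ∧
    (s ≠ 0 → P.eval z ≠ 0 →
      0 < (derivative P).eval z ^ 2 - P.eval z * (derivative (derivative P)).eval z) := by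
  induction s using Multiset.induction with
  | empty => simp
  | cons r s ih =>
    obtain ⟨h1, -⟩ := ih
    simp only [Multiset.map_cons, Multiset.prod_cons]
    set P := (s.map (fun r => X - C r)).prod with hP
    have e : (derivative ((X - C r) * P)).eval z ^ 2 - ((X - C r) * P).eval z *
        (derivative (derivative ((X - C r) * P))).eval z =
        (z - r) ^ 2 * ((derivative P).eval z ^ 2 - P.eval z * (derivative (derivative P)).eval z)
          + P.eval z ^ 2 := by
      simp [derivative_mul]
      ring
    rw [e]
    constructor
    · positivity
    · intro _ h
      have : P.eval z ≠ 0 := by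
        intro h0; apply h; simp [h0]
      positivity

lemma laguerre {g : ℝ[X]} (hg : g.Splits) (z : ℝ) :
    0 ≤ (derivative g).eval z ^ 2 - g.eval z * (derivative (derivative g)).eval z ∧
    (g.natDegree ≠ 0 → g.eval z ≠ 0 →
      0 < (derivative g).eval z ^ 2 - g.eval z * (derivative (derivative g)).eval z) := by
  have h := laguerre_multiset z g.roots
  have hc := splits_iff_card_roots.1 hg
  have hr := hg.eq_prod_roots
  set P := (g.roots.map (fun r => X - C r)).prod with hP
  simp only at h
  obtain ⟨h1, h2⟩ := h
  have e : (derivative g).eval z ^ 2 - g.eval z * (derivative (derivative g)).eval z =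
      g.leadingCoeff ^ 2 *
        ((derivative P).eval z ^ 2 - P.eval z * (derivative (derivative P)).eval z) := by
    generalize g.leadingCoeff = l at *
    clear_value P
    subst hr
    simp
    ring
  rw [e]
  refine ⟨by positivity, fun h3 h4 => ?_⟩
  have h5 : g.roots ≠ 0 := by
    intro h; rw [h] at hc; simp at hc; omega
  rw [hr, eval_mul, eval_C] at h4
  have := h2 h5 (right_ne_zero_of_mul h4)
  have := left_ne_zero_of_mul h4
  positivity

lemma sign_multiset (z σ : ℝ) (s : Multiset ℝ) (hs : ∀ r ∈ s, σ * (z - r) ≤ 0) :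
    let P := (s.map (fun r => X - C r)).prod
    σ * ((derivative P).eval z * P.eval z) ≤ 0 ∧
    (σ ≠ 0 → s ≠ 0 → P.eval z ≠ 0 → σ * ((derivative P).eval z * P.eval z) < 0) := by
  induction s using Multiset.induction with
  | empty => simp
  | cons r s ih =>
    obtain ⟨h1, -⟩ := ih (fun r hr => hs r (Multiset.mem_cons_of_mem hr))
    have hr := hs r (Multiset.mem_cons_self r s)
    simp only [Multiset.map_cons, Multiset.prod_cons]
    set P := (s.map (fun r => X - C r)).prod with hP
    have e : σ * ((derivative ((X - C r) * P)).eval z * ((X - C r) * P).eval z) =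
        (z - r) ^ 2 * (σ * ((derivative P).eval z * P.eval z))
          + (σ * (z - r)) * P.eval z ^ 2 := by
      simp [derivative_mul]
      ring
    rw [e]
    have h3 := mul_nonpos_of_nonneg_of_nonpos (sq_nonneg (z - r)) h1
    constructor
    · have := mul_nonpos_of_nonpos_of_nonneg hr (sq_nonneg (P.eval z))
      linarith
    · intro hσ _ h
      have h4 : P.eval z ≠ 0 := by
        intro h0; apply h; simp [h0]
      have h5 : z - r ≠ 0 := by
        intro h0; apply h; simp [h0]
      have h6 : σ * (z - r) < 0 := lt_of_le_of_ne hr (mul_ne_zero hσ h5)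
      have := mul_neg_of_neg_of_pos h6 (pow_pos (abs_pos.2 h4) 2)
      rw [sq_abs] at this
      linarith

lemma sign_step {g : ℝ[X]} (hg : g.Splits) (z σ : ℝ) (hσ : σ ≠ 0) (hd : g.natDegree ≠ 0)
    (hs : ∀ r, g.eval r = 0 → σ * (z - r) ≤ 0) (h' : (derivative g).eval z = 0) :
    g.eval z = 0 := by
  by_contra h4
  have g0 : g ≠ 0 := by rintro rfl; simp at hd
  have h := sign_multiset z σ g.roots (fun r hr => hs r ((mem_roots g0).1 hr))
  have hc := splits_iff_card_roots.1 hg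
  have hr := hg.eq_prod_roots
  set P := (g.roots.map (fun r => X - C r)).prod with hP
  simp only at h
  have h5 : g.roots ≠ 0 := by
    intro h; rw [h] at hc; simp at hc; omega
  rw [hr, eval_mul, eval_C] at h4
  have h6 := h.2 hσ h5 (right_ne_zero_of_mul h4)
  rw [hr] at h'
  simp only [derivative_mul, derivative_C, zero_mul, zero_add, eval_mul, eval_C] at h'
  have := (mul_eq_zero.1 h').resolve_left (left_ne_zero_of_mul h4)
  rw [this] at h6
  simp at h6

lemma splits_der {g : ℝ[X]} (hg : g.Splits) : (derivative g).Splits := by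
  rw [splits_iff_card_roots] at *
  have h1 := card_roots_le_derivative g
  have h2 := natDegree_derivative g
  have h3 := card_roots' (derivative g)
  omega

lemma splits_iter {g : ℝ[X]} (hg : g.Splits) (j : ℕ) : (derivative^[j] g).Splits := by
  induction j with
  | zero => exact hg
  | succ j ih => rw [Function.iterate_succ_apply']; exact splits_der ih

lemma deg_iter (g : ℝ[X]) (j : ℕ) : (derivative^[j] g).natDegree = g.natDegree - j := by
  induction j with
  | zero => simp
  | succ j ih => rw [Function.iterate_succ_apply', natDegree_derivative, ih]; omega

/-- consecutive derivatives sharing a root -/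
lemma mult_of_two {f : ℝ[X]} (hf : f.Splits) (z : ℝ) (j : ℕ) (hj : j + 1 ≤ f.natDegree)
    (h1 : (derivative^[j] f).eval z = 0) (h2 : (derivative^[j + 1] f).eval z = 0) :
    j + 2 ≤ f.rootMultiplicity z := by
  have f0 : f ≠ 0 := by rintro rfl; simp at hj
  have key : ∀ i, i ≤ j → (derivative^[j - i] f).eval z = 0 ∧
      (derivative^[j - i + 1] f).eval z = 0 := by
    intro i
    induction i with
    | zero => intro _; exact ⟨h1, h2⟩
    | succ i ih =>
      intro hi
      obtain ⟨a, b⟩ := ih (by omega)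
      have e : j - i = j - (i + 1) + 1 := by omega
      rw [e] at a b
      refine ⟨?_, a⟩
      by_contra hne
      have := (laguerre (splits_iter hf (j - (i + 1))) z).2 (by rw [deg_iter]; omega) hne
      rw [Function.iterate_succ_apply'] at a b
      rw [Function.iterate_succ_apply'] at b
      rw [a, b] at this
      simp at this
  have := (lt_rootMultiplicity_iff_isRoot_iterate_derivative (t := z) (n := j + 1) f0).2 (by
    intro m hm
    rcases Nat.lt_or_ge j m with h | h
    · have : m = j + 1 := by omega
      subst this; exact h2
    · have := (key (j - m) (by omega)).1
      rwa [show j - (j - m) = m by omega] at this)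
  omega

lemma mult_of_ext {f : ℝ[X]} (hf : f.Splits) (z σ : ℝ) (hσ : σ ≠ 0) (j : ℕ)
    (hj : j + 1 ≤ f.natDegree) (hs : ∀ r, f.eval r = 0 → σ * (z - r) ≤ 0)
    (h1 : (derivative^[j] f).eval z = 0) :
    j + 1 ≤ f.rootMultiplicity z := by
  have f0 : f ≠ 0 := by rintro rfl; simp at hj
  have hall : ∀ i, i ≤ j → ∀ r, (derivative^[i] f).eval r = 0 → σ * (z - r) ≤ 0 := by
    intro i
    induction i with
    | zero => intro _; exact hs
    | succ i ih =>
      intro hi x hx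
      have ih := ih (by omega)
      by_contra hlt
      push Not at hlt
      rw [Function.iterate_succ_apply'] at hx
      have := sign_step (splits_iter hf i) x σ hσ (by rw [deg_iter]; omega) (by
        intro r hr
        have := ih r hr
        linarith) hx
      linarith [ih x this]
  have key : ∀ i, i ≤ j → (derivative^[j - i] f).eval z = 0 := by
    intro i
    induction i with
    | zero => intro _; exact h1
    | succ i ih =>
      intro hi
      have a := ih (by omega)
      have e : j - i = j - (i + 1) + 1 := by omega
      rw [e, Function.iterate_succ_apply'] at a
      exact sign_step (splits_iter hf _) z σ hσ (by rw [deg_iter]; omega)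
        (hall _ (by omega)) a
  have := (lt_rootMultiplicity_iff_isRoot_iterate_derivative (t := z) (n := j) f0).2 (by
    intro m hm
    have := (key (j - m) (by omega))
    rwa [show j - (j - m) = m by omega] at this)
  omega

lemma quintic_der (h : ℝ[X]) (a0 a1 a2 a3 a4 a5 : ℝ) (e : h = 0 + C a0 * X ^ 0 + C a1 * X ^ 1
      + C a2 * X ^ 2 + C a3 * X ^ 3 + C a4 * X ^ 4 + C a5 * X ^ 5) :
    derivative h = 0 + C a1 * X ^ 0 + C (a2 * 2) * X ^ 1 + C (a3 * 3) * X ^ 2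
      + C (a4 * 4) * X ^ 3 + C (a5 * 5) * X ^ 4 + C 0 * X ^ 5 := by
  rw [e]
  simp only [derivative_add, derivative_C_mul_X_pow, derivative_zero, Nat.cast_ofNat,
    Nat.cast_one, Nat.cast_zero, mul_zero, mul_one, C_0, zero_mul, zero_add, add_zero,
    Nat.add_one_sub_one, Nat.reduceSub]

lemma quintic_eval {h : ℝ[X]} (hd : h.natDegree = 5) : ∃ c0 c1 c2 c3 c4 c5 : ℝ, c5 ≠ 0 ∧ ∀ x,
    h.eval x = c0 + c1 * x + c2 * x ^ 2 + c3 * x ^ 3 + c4 * x ^ 4 + c5 * x ^ 5 ∧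
    (derivative^[1] h).eval x = c1 + 2 * c2 * x + 3 * c3 * x ^ 2 + 4 * c4 * x ^ 3 + 5 * c5 * x ^ 4 ∧
    (derivative^[2] h).eval x = 2 * c2 + 6 * c3 * x + 12 * c4 * x ^ 2 + 20 * c5 * x ^ 3 ∧
    (derivative^[3] h).eval x = 6 * c3 + 24 * c4 * x + 60 * c5 * x ^ 2 ∧
    (derivative^[4] h).eval x = 24 * c4 + 120 * c5 * x := by
  have e := h.as_sum_range' 6 (by omega)
  have hl : h.coeff 5 ≠ 0 := by
    rw [← hd]; exact leadingCoeff_ne_zero.2 (by rintro rfl; simp at hd)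
  simp only [Finset.sum_range_succ, Finset.sum_range_zero, ← C_mul_X_pow_eq_monomial] at e
  refine ⟨h.coeff 0, h.coeff 1, h.coeff 2, h.coeff 3, h.coeff 4, h.coeff 5, hl, fun x => ?_⟩
  generalize h.coeff 0 = c0 at *
  generalize h.coeff 1 = c1 at *
  generalize h.coeff 2 = c2 at *
  generalize h.coeff 3 = c3 at *
  generalize h.coeff 4 = c4 at *
  generalize h.coeff 5 = c5 at *
  have e1 := quintic_der _ _ _ _ _ _ _ e
  have e2 := quintic_der _ _ _ _ _ _ _ e1
  have e3 := quintic_der _ _ _ _ _ _ _ e2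
  have e4 := quintic_der _ _ _ _ _ _ _ e3
  simp only [Function.iterate_succ_apply', Function.iterate_zero_apply]
  rw [e1] at e2 e3 e4 ⊢
  rw [e2] at e3 e4 ⊢
  rw [e3] at e4 ⊢
  rw [e4, e]
  clear e e1 e2 e3 e4 hd hl
  simp only [eval_add, eval_mul, eval_pow, eval_X, eval_C, eval_zero]
  refine ⟨?_, ?_, ?_, ?_, ?_⟩ <;> ring

lemma quintic0 {h : ℝ[X]} (hs : h.Splits) (hd : h.natDegree = 5) (b : ℝ) (hb : b ≠ 0)
    (h4 : (derivative^[4] h).eval 0 = 0) (h3 : (derivative^[3] h).eval b = 0)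
    (h2 : (derivative^[2] h).eval 0 = 0) (h1 : (derivative^[1] h).eval b = 0) :
    ∃ w, w ≠ 0 ∧ h.eval w = 0 ∧ (derivative^[1] h).eval w = 0 ∧
      h.eval (-w) = 0 ∧ (derivative^[1] h).eval (-w) = 0 := by
  obtain ⟨c0, c1, c2, c3, c4, c5, hl, H⟩ := quintic_eval hd
  have lag1 := (laguerre hs (Real.sqrt 5 * b)).1
  have lag2 := (laguerre hs (-(Real.sqrt 5 * b))).1
  have s5 : Real.sqrt 5 ^ 2 = 5 := Real.sq_sqrt (by norm_num)
  have s0 : 0 < Real.sqrt 5 := by positivity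
  generalize Real.sqrt 5 = t at *
  change 0 ≤ (derivative^[1] h).eval _ ^ 2 - h.eval _ * (derivative^[2] h).eval _ at lag1
  change 0 ≤ (derivative^[1] h).eval _ ^ 2 - h.eval _ * (derivative^[2] h).eval _ at lag2
  obtain ⟨u0, u1, u2, -, -⟩ := H (t * b)
  obtain ⟨v0, v1, v2, -, -⟩ := H (-(t * b))
  rw [(H 0).2.2.2.2] at h4
  rw [(H 0).2.2.1] at h2
  rw [(H b).2.2.2.1] at h3
  rw [(H b).2.1] at h1
  clear H
  obtain rfl : c4 = 0 := by linarith
  obtain rfl : c2 = 0 := by linarith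
  obtain rfl : c3 = -10 * c5 * b ^ 2 := by linarith
  obtain rfl : c1 = 25 * c5 * b ^ 4 := by linarith
  have u0 : h.eval (t * b) = c0 := by
    rw [u0]; linear_combination (c5 * b ^ 5 * t * (t ^ 2 - 5)) * s5
  have u1 : (derivative^[1] h).eval (t * b) = 0 := by
    rw [u1]; linear_combination (5 * c5 * b ^ 4 * (t ^ 2 - 1)) * s5
  have u2 : (derivative^[2] h).eval (t * b) = 40 * c5 * b ^ 3 * t := by
    rw [u2]; linear_combination (20 * c5 * b ^ 3 * t) * s5
  have v0 : h.eval (-(t * b)) = c0 := by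
    rw [v0]; linear_combination -(c5 * b ^ 5 * t * (t ^ 2 - 5)) * s5
  have v1 : (derivative^[1] h).eval (-(t * b)) = 0 := by
    rw [v1]; linear_combination (5 * c5 * b ^ 4 * (t ^ 2 - 1)) * s5
  have v2 : (derivative^[2] h).eval (-(t * b)) = -(40 * c5 * b ^ 3 * t) := by
    rw [v2]; linear_combination -(20 * c5 * b ^ 3 * t) * s5
  rw [u0, u1, u2] at lag1
  rw [v0, v1, v2] at lag2
  have d0 : c0 = 0 := by
    have : c0 * (40 * c5 * b ^ 3 * t) = 0 := by linarith
    refine (mul_eq_zero.1 this).resolve_right ?_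
    have := s0.ne'
    positivity
  exact ⟨t * b, mul_ne_zero s0.ne' hb, by rw [u0, d0], u1, by rw [v0, d0], v1⟩

lemma iter_taylor (f : ℝ[X]) (z : ℝ) (j : ℕ) :
    derivative^[j] (taylor z f) = taylor z (derivative^[j] f) := by
  induction j with
  | zero => rfl
  | succ j ih =>
    rw [Function.iterate_succ_apply', ih, Function.iterate_succ_apply']
    simp [taylor_apply, derivative_comp]

lemma quintic {g : ℝ[X]} (hs : g.Splits) (hd : g.natDegree = 5) (z y : ℝ) (hb : y ≠ z)
    (h4 : (derivative^[4] g).eval z = 0) (h3 : (derivative^[3] g).eval y = 0)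
    (h2 : (derivative^[2] g).eval z = 0) (h1 : (derivative^[1] g).eval y = 0) :
    ∃ w w', w ≠ w' ∧ g.eval w = 0 ∧ (derivative^[1] g).eval w = 0 ∧
      g.eval w' = 0 ∧ (derivative^[1] g).eval w' = 0 := by
  obtain ⟨w, hw, a, b, c, d⟩ := quintic0 (hs.taylor z) (by rw [natDegree_taylor, hd]) (y - z)
    (sub_ne_zero.2 hb) (by rw [iter_taylor, taylor_eval]; simpa using h4)
    (by rw [iter_taylor, taylor_eval]; simpa using h3)
    (by rw [iter_taylor, taylor_eval]; simpa using h2)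
    (by rw [iter_taylor, taylor_eval]; simpa using h1)
  simp only [iter_taylor, taylor_eval] at a b c d
  exact ⟨_, _, fun h => hw (by linarith), a, b, c, d⟩

lemma rcase0 (k : ℕ) (F : ℝ[X]) (l r b c : ℝ) (hl : l ≠ 0) (hr : r ≠ 0) (hb : b ≠ 0) (hc : c ≠ 0)
    (hbc : b ≠ c) (hF : F = C l * ((X + C r) ^ (k + 2) * (X * (X - C b) * (X - C c))))
    (h1 : F.coeff (k + 4) = 0) (h2 : F.coeff (k + 2) = 0) : False := by
  have e : F = C l * ((X + C r) ^ (k + 2) * X ^ 3 - C (b + c) * ((X + C r) ^ (k + 2) * X ^ 2)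
      + C (b * c) * ((X + C r) ^ (k + 2) * X ^ 1)) := by
    rw [hF, C_add, C_mul]; ring
  rw [e] at h1 h2
  clear e hF
  simp only [coeff_C_mul, coeff_add, coeff_sub, mul_eq_zero, hl, false_or, coeff_mul_X_pow', coeff_X_add_C_pow] at h1 h2
  have q2 : ((k + 2).choose k : ℝ) = (k + 2) * (k + 1) / 2 := by
    rw [Nat.choose_symm_add, Nat.cast_choose_two]; push_cast; ring
  have q1 : ((k + 2).choose (k + 1) : ℝ) = (k + 2) := by
    rw [show (k + 2) = k + 1 + 1 by ring, Nat.choose_symm_add]; push_cast; simp; ring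
  have q3 : (if 3 ≤ k + 2 then r ^ (k + 2 - (k + 2 - 3)) * ((k + 2).choose (k + 2 - 3) : ℝ) else 0)
      = r ^ 3 * ((k + 2) * (k + 1) * k / 6) := by
    split_ifs with h
    · obtain ⟨k, rfl⟩ : ∃ i, k = i + 1 := ⟨k - 1, by omega⟩
      have := Nat.add_one_mul_choose_eq (k + 2) 2
      have h3 : ((k + 3 : ℕ) : ℝ) * ((k + 2).choose 2 : ℕ) = ((k + 3).choose 3 : ℕ) * 3 := by
        exact_mod_cast this
      rw [Nat.cast_choose_two] at h3
      simp only [show k + 1 + 2 = k + 3 by ring, show k + 3 - 3 = k by omega, show k + 3 - k = 3 by omega]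
      rw [Nat.choose_symm_add]
      push_cast at h3 ⊢
      linear_combination (- r ^ 3 / 3) * h3
    · have : k = 0 := by omega
      simp [this]
  rw [q3] at h2
  simp only [show k + 2 - 2 = k by omega, show k + 2 - 1 = k + 1 by omega,
    show k + 2 - k = 2 by omega, show k + 2 - (k + 1) = 1 by omega, q1, q2,
    show 2 ≤ k + 2 by omega, show 1 ≤ k + 2 by omega, if_true] at h2
  simp only [show k + 4 - 3 = k + 1 by omega, show k + 4 - 2 = k + 2 by omega,
    show k + 4 - 1 = k + 3 by omega, show k + 2 - (k + 1) = 1 by omega, q1,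
    show 3 ≤ k + 4 by omega, show 2 ≤ k + 4 by omega, show 1 ≤ k + 4 by omega, if_true,
    Nat.choose_succ_self, Nat.choose_self] at h1
  simp at h1
  have hs : b + c = r * (k + 2) := by linarith
  rw [hs] at h2
  have k0 : (0 : ℝ) ≤ k := Nat.cast_nonneg k
  have hp : b * c = r ^ 2 * ((k + 1) * (k + 3)) / 3 := by
    have h3 : r * (k + 2) * (b * c - r ^ 2 * ((k + 1) * (k + 3)) / 3) = 0 := by
      linear_combination h2
    have := (mul_eq_zero.1 h3).resolve_left (by positivity)
    linarith
  have h5 : 0 < (b - c) ^ 2 := by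
    have := sub_ne_zero.2 hbc
    positivity
  have h6 : (b - c) ^ 2 = - (r ^ 2 * (k * (k + 4))) / 3 := by
    linear_combination (b + c + r * (k + 2)) * hs - 4 * hp
  have : 0 ≤ r ^ 2 * (k * (k + 4)) := by positivity
  linarith

lemma rcase (k : ℕ) (f : ℝ[X]) (l z r b c : ℝ) (hl : l ≠ 0) (hr : r ≠ z) (hb : b ≠ z) (hc : c ≠ z)
    (hbc : b ≠ c) (hF : f = C l * ((X - C r) ^ (k + 2) * ((X - C z) * (X - C b) * (X - C c))))
    (h1 : (derivative^[k + 4] f).eval z = 0) (h2 : (derivative^[k + 2] f).eval z = 0) :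
    False := by
  have key : ∀ j, (derivative^[j] f).eval z = 0 → (taylor z f).coeff j = 0 := by
    intro j hj
    rw [taylor_coeff]
    rw [← factorial_smul_hasseDeriv] at hj
    simpa [Nat.factorial_ne_zero] using hj
  refine rcase0 k (taylor z f) l (z - r) (b - z) (c - z) hl (sub_ne_zero.2 hr.symm)
    (sub_ne_zero.2 hb) (sub_ne_zero.2 hc) (fun h => hbc (by linarith)) ?_ (key _ h1) (key _ h2)
  rw [hF]
  simp only [taylor_mul, taylor_pow, map_sub, taylor_X, taylor_C, C_sub]
  ring

lemma real_splits (f : ℝ[X]) (hreal : ∀ z : ℂ, aeval z f = 0 → z.im = 0) : f.Splits := by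
  refine Splits.of_splits_map (algebraMap ℝ ℂ) (IsAlgClosed.splits _) ?_
  intro a ha
  have h := (mem_roots'.1 ha).2
  rw [IsRoot, eval_map_algebraMap] at h
  exact ⟨a.re, Complex.ext (by simp) (by simp [hreal a h])⟩

lemma final_case (k : ℕ) (f : ℝ[X]) (hf : f.Splits) (hd : f.natDegree = k + 5) (z b r c : ℝ)
    (hS : f.roots.toFinset = {r, z, b, c}) (hrz : r ≠ z) (hrb : r ≠ b) (hrc : r ≠ c)
    (hbz : b ≠ z) (hcz : c ≠ z) (hbc : b ≠ c)
    (hm : k + 2 ≤ f.rootMultiplicity r)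
    (h1 : (derivative^[k + 4] f).eval z = 0) (h2 : (derivative^[k + 2] f).eval z = 0) :
    False := by
  have f0 : f ≠ 0 := by rintro rfl; simp at hd
  have hcard := splits_iff_card_roots.1 hf
  rw [← Multiset.toFinset_sum_count_eq, hS, hd] at hcard
  have pos : ∀ x ∈ f.roots.toFinset, 1 ≤ f.roots.count x := by
    intro x hx
    exact Multiset.one_le_count_iff_mem.2 (Multiset.mem_toFinset.1 hx)
  rw [hS] at pos
  rw [Finset.sum_insert (by simp [*]), Finset.sum_insert (by simp [hbz.symm, hcz.symm]),
    Finset.sum_insert (by simp [*]), Finset.sum_singleton] at hcard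
  have p1 := pos z (by simp)
  have p2 := pos b (by simp)
  have p3 := pos c (by simp)
  rw [← count_roots] at hm
  have hr := hf.eq_prod_roots
  rw [Finset.prod_multiset_map_count, hS, Finset.prod_insert (by simp [*]),
    Finset.prod_insert (by simp [hbz.symm, hcz.symm]),
    Finset.prod_insert (by simp [*]), Finset.prod_singleton,
    show f.roots.count r = k + 2 by omega, show f.roots.count z = 1 by omega,
    show f.roots.count b = 1 by omega, show f.roots.count c = 1 by omega] at hr
  refine rcase k f f.leadingCoeff z r b c (leadingCoeff_ne_zero.2 f0) hrz hbz hcz hbc ?_ h1 h2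
  conv_lhs => rw [hr]
  ring

theorem stmt6 (n : ℕ) (hn : 2 ≤ n) (f : Polynomial ℝ) (hdeg : f.natDegree = n)
    (hreal : ∀ z : ℂ, Polynomial.aeval z f = 0 → z.im = 0)
    (hCA : ∀ j : ℕ, 1 ≤ j → j ≤ n - 1 →
      ∃ z : ℝ, f.eval z = 0 ∧ (Polynomial.derivative^[j] f).eval z = 0)
    (hnt : ¬ ∃ a b : ℝ, f = Polynomial.C a * (Polynomial.X - Polynomial.C b) ^ n) :
    5 ≤ f.roots.toFinset.card := by
  have hf := real_splits f hreal
  have f0 : f ≠ 0 := by rintro rfl; simp at hdeg; omega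
  have hcard := splits_iff_card_roots.1 hf
  rw [hdeg] at hcard
  by_contra hlt
  push Not at hlt
  have hsum := Multiset.toFinset_sum_count_eq f.roots
  rw [hcard] at hsum
  have hmem : ∀ x, x ∈ f.roots.toFinset ↔ f.eval x = 0 := by
    intro x; rw [Multiset.mem_toFinset, mem_roots f0, IsRoot]
  have pos : ∀ x ∈ f.roots.toFinset, 1 ≤ f.roots.count x := by
    intro x hx
    exact Multiset.one_le_count_iff_mem.2 (Multiset.mem_toFinset.1 hx)
  set S := f.roots.toFinset with hSdef
  have multb : ∀ x ∈ S, f.rootMultiplicity x + S.card ≤ n + 1 := by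
    intro x hx
    rw [← Finset.add_sum_erase S _ hx, count_roots] at hsum
    have h1 : (S.erase x).card • 1 ≤ ∑ y ∈ S.erase x, f.roots.count y :=
      Finset.card_nsmul_le_sum _ _ _ (fun y hy => pos y (Finset.mem_of_mem_erase hy))
    rw [Finset.card_erase_of_mem hx, smul_eq_mul, mul_one] at h1
    omega
  have multn : ∀ x, f.rootMultiplicity x < n := by
    intro x
    by_contra h
    push Not at h
    apply hnt
    rw [← count_roots, Multiset.le_count_iff_replicate_le] at h
    have h := Multiset.eq_of_le_of_card_le h (by simp [hcard])
    refine ⟨f.leadingCoeff, x, ?_⟩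
    conv_lhs => rw [hf.eq_prod_roots, ← h]
    simp
  have hne : S.Nonempty := by
    obtain ⟨z, hz, -⟩ := hCA 1 le_rfl (by omega)
    exact ⟨z, (hmem z).2 hz⟩
  obtain ⟨a, haS, ha⟩ := S.exists_min_image id hne
  obtain ⟨d, hdS, hd⟩ := S.exists_max_image id hne
  simp only [id] at ha hd
  have exta : ∀ j, j + 1 ≤ n → (derivative^[j] f).eval a = 0 → j + 1 ≤ f.rootMultiplicity a :=
    fun j hj h => mult_of_ext hf a 1 one_ne_zero j (by omega)
      (fun r hr => by linarith [ha r ((hmem r).2 hr)]) h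
  have extd : ∀ j, j + 1 ≤ n → (derivative^[j] f).eval d = 0 → j + 1 ≤ f.rootMultiplicity d :=
    fun j hj h => mult_of_ext hf d (-1) (by norm_num) j (by omega)
      (fun r hr => by linarith [hd r ((hmem r).2 hr)]) h
  have two := fun z j (hj : j + 1 ≤ n) => mult_of_two hf z j (by omega)
  have ma := multn a
  have md := multn d
  -- the centroid
  obtain ⟨z, hz, hz1⟩ := hCA (n - 1) (by omega) le_rfl
  have zS := (hmem z).2 hz
  have za : z ≠ a := by
    rintro rfl; have := exta _ (by omega) hz1; omega
  have zd : z ≠ d := by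
    rintro rfl; have := extd _ (by omega) hz1; omega
  have ad : a ≠ d := by
    rintro rfl; exact za (le_antisymm (hd z zS) (ha z zS))
  have c3 : 3 ≤ S.card := by
    have h : ({z, a, d} : Finset ℝ) ⊆ S := by
      intro x; simp only [Finset.mem_insert, Finset.mem_singleton]
      rintro (rfl | rfl | rfl) <;> assumption
    have := Finset.card_le_card h
    rwa [Finset.card_eq_three.2 ⟨z, a, d, za, zd, ad, rfl⟩] at this
  have mba := multb a haS
  have mbd := multb d hdS
  have n3 : 3 ≤ n := by
    have : 1 ≤ f.rootMultiplicity a := by rw [← count_roots]; exact pos a haS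
    omega
  obtain ⟨b, hb, hb1⟩ := hCA (n - 2) (by omega) (by omega)
  have bS := (hmem b).2 hb
  have ba : b ≠ a := by
    rintro rfl; have := exta _ (by omega) hb1; omega
  have bd : b ≠ d := by
    rintro rfl; have := extd _ (by omega) hb1; omega
  have bz : b ≠ z := by
    rintro rfl
    have := two b (n - 2) (by omega) hb1 (by rwa [show n - 2 + 1 = n - 1 by omega])
    have := multn b
    omega
  have hsub : ({a, z, b, d} : Finset ℝ) ⊆ S := by
    intro x; simp only [Finset.mem_insert, Finset.mem_singleton]
    rintro (rfl | rfl | rfl | rfl) <;> assumption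
  have hc4 : ({a, z, b, d} : Finset ℝ).card = 4 := by
    rw [Finset.card_insert_of_notMem (by simp [za.symm, ba.symm, ad]),
      Finset.card_eq_three.2 ⟨z, b, d, bz.symm, zd, bd, rfl⟩]
  have hSe := Finset.eq_of_subset_of_card_le hsub (by omega)
  have c4 : S.card = 4 := by rw [← hSe, hc4]
  have mall : ∀ x, f.eval x = 0 → x = a ∨ x = z ∨ x = b ∨ x = d := by
    intro x hx
    have := (hmem x).2 hx
    rw [← hSe] at this
    simpa using this
  rw [c4] at multb mba mbd
  have mbz := multb z zS
  have mbb := multb b bS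
  have n4 : 4 ≤ n := by
    have : 1 ≤ f.rootMultiplicity a := by rw [← count_roots]; exact pos a haS
    omega
  obtain ⟨z3, hz3, hz31⟩ := hCA (n - 3) (by omega) (by omega)
  have e3 : z3 = z := by
    rcases mall z3 hz3 with rfl | rfl | rfl | rfl
    · have := exta _ (by omega) hz31; omega
    · rfl
    · have := two z3 (n - 3) (by omega) hz31 (by rwa [show n - 3 + 1 = n - 2 by omega])
      omega
    · have := extd _ (by omega) hz31; omega
  subst e3
  have n5 : 5 ≤ n := by
    by_contra h
    obtain rfl : n = 4 := by omega
    have := two z3 0 (by omega) hz hz31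
    omega
  obtain ⟨k, rfl⟩ : ∃ k, n = k + 5 := ⟨n - 5, by omega⟩
  obtain ⟨y, hy, hy1⟩ := hCA (k + 1) (by omega) (by omega)
  simp only [show k + 5 - 1 = k + 4 by omega, show k + 5 - 2 = k + 3 by omega,
    show k + 5 - 3 = k + 2 by omega] at hz1 hb1 hz31
  rcases mall y hy with rfl | rfl | rfl | rfl
  · exact final_case k f hf hdeg z3 b y d (by rw [← hSdef, ← hSe]) za.symm ba.symm ad bz zd.symm bd
      (exta _ (by omega) hy1) hz1 hz31
  · have := two y (k + 1) (by omega) hy1 hz31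
    omega
  · have hit : ∀ i, derivative^[i] (derivative^[k] f) = derivative^[k + i] f := by
      intro i; rw [add_comm, Function.iterate_add_apply]
    obtain ⟨w, w', hw, w1, w2, w3, w4⟩ := quintic (splits_iter hf k)
      (by rw [deg_iter]; omega) z3 y bz (by rwa [hit]) (by rwa [hit]) (by rwa [hit]) (by rwa [hit])
    rw [hit] at w2 w4
    have m1 := two w k (by omega) w1 w2
    have m2 := two w' k (by omega) w3 w4
    have wS : w ∈ S := by
      rw [hSdef, Multiset.mem_toFinset, ← Multiset.one_le_count_iff_mem, count_roots]; omega
    have wS' : w' ∈ S.erase w := by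
      refine Finset.mem_erase.2 ⟨hw.symm, ?_⟩
      rw [hSdef, Multiset.mem_toFinset, ← Multiset.one_le_count_iff_mem, count_roots]; omega
    rw [← Finset.add_sum_erase S _ wS, ← Finset.add_sum_erase _ _ wS', count_roots,
      count_roots] at hsum
    have h1 : ((S.erase w).erase w').card • 1 ≤ ∑ y ∈ (S.erase w).erase w', f.roots.count y :=
      Finset.card_nsmul_le_sum _ _ _ (fun y hy => pos y
        (Finset.mem_of_mem_erase (Finset.mem_of_mem_erase hy)))
    rw [Finset.card_erase_of_mem wS', Finset.card_erase_of_mem wS, smul_eq_mul, mul_one, c4] at h1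
    omega
  · refine final_case k f hf hdeg z3 b y a ?_ zd.symm bd.symm ad.symm bz za.symm ba
      (extd _ (by omega) hy1) hz1 hz31
    rw [← hSdef, ← hSe]
    ext x
    simp only [Finset.mem_insert, Finset.mem_singleton]
    tauto
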